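/- arXiv:2410.16761 — 2 statements merged into one kernel-verified Lean document; each statement's English description precedes it below -/
import Mathlib

section
/- Let B be an abelian group with operators in a set A, let σ_A, δ_A : A → A be maps, and let σ_B, δ_B be additive endomorphisms of B. Suppose that σ_B is σ_A-twisted and that δ_B is a δ_A-twisted σ_A-derivation. Then for all a ∈ A, b ∈ B and i, m ∈ ℕ the Leibniz identity π_i^m(ab) = ∑_{k=0}^{m} ∑_{w ∈ W_{m,k}} w_A(a) · π_i^k(b) holds in B, where W_{m,k} is the set of words of length m in the two letters σ and δ containing exactly k occurrences of σ, and for such a word w, w_A(a) ∈ A is obtained by applying to a the corresponding composition of σ_A and δ_A. -/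
/-- `words m k` : the words of length `m` in the two letters `σ` (encoded `true`)
and `δ` (encoded `false`) containing exactly `k` occurrences of `σ`. -/
def words (m k : ℕ) : Finset (Fin m → Bool) :=
  Finset.univ.filter fun w => (Finset.univ.filter fun t => w t = true).card = k

/-- Apply a word in the letters `σ`, `δ` to `x`, i.e. the composition of the
corresponding maps applied to `x`. -/
def wordApply {X : Type*} (σ δ : X → X) {m : ℕ} (w : Fin m → Bool) (x : X) : X :=
  (List.ofFn fun t => if w t then σ else δ).foldr (fun f y => f y) x

/-- `piFun σ δ i j` is the map `π_j^i : B → B`, the sum of all `binom(i,j)`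
compositions of `j` instances of `σ` and `i - j` instances of `δ`
(in particular it is `0` for `j > i` and the identity for `i = j = 0`). -/
def piFun {B : Type*} [AddCommMonoid B] (σ δ : B → B) (i j : ℕ) (b : B) : B :=
  ∑ w ∈ words i j, wordApply σ δ w b

def cnt {m : ℕ} (w : Fin m → Bool) : ℕ := (Finset.univ.filter fun t => w t = true).card

theorem cnt_cons {m : ℕ} (c : Bool) (w : Fin m → Bool) :
    cnt (Fin.cons c w : Fin (m + 1) → Bool) = cnt w + (if c then 1 else 0) := by
  unfold cnt
  rw [Fin.card_filter_univ_succ]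
  cases c <;> simp

theorem sum_cons_words {M : Type*} [AddCommMonoid M] {m : ℕ} (G : (Fin (m + 1) → Bool) → M) :
    ∑ w, G w = ∑ w : Fin m → Bool, (G (Fin.cons true w) + G (Fin.cons false w)) := by
  rw [← (Fin.consEquiv fun _ : Fin (m + 1) => Bool).sum_comp, Fintype.sum_prod_type,
    Fintype.sum_bool, Finset.sum_add_distrib]
  rfl

theorem sum_words {M : Type*} [AddCommMonoid M] {m k : ℕ} (G : (Fin m → Bool) → M) :
    ∑ w ∈ words m k, G w = ∑ w, if cnt w = k then G w else 0 := by
  unfold words cnt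
  rw [Finset.sum_filter]

theorem wordApply_cons {X : Type*} (σ δ : X → X) {m : ℕ} (c : Bool) (w : Fin m → Bool) (x : X) :
    wordApply σ δ (Fin.cons c w : Fin (m + 1) → Bool) x
      = (if c then σ else δ) (wordApply σ δ w x) := by
  simp [wordApply, List.ofFn_succ]

theorem piFun_succ_zero {B : Type*} [AddCommGroup B] (σ δ : B →+ B) (m : ℕ) (b : B) :
    piFun σ δ (m + 1) 0 b = δ (piFun σ δ m 0 b) := by
  unfold piFun
  rw [sum_words, sum_words, sum_cons_words, map_sum]
  refine Finset.sum_congr rfl fun w _ => ?_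
  simp [cnt_cons, wordApply_cons, apply_ite δ]

theorem piFun_succ_succ {B : Type*} [AddCommGroup B] (σ δ : B →+ B) (m i : ℕ) (b : B) :
    piFun σ δ (m + 1) (i + 1) b = σ (piFun σ δ m i b) + δ (piFun σ δ m (i + 1) b) := by
  unfold piFun
  rw [sum_words, sum_words, sum_words, sum_cons_words, map_sum, map_sum,
    ← Finset.sum_add_distrib]
  refine Finset.sum_congr rfl fun w _ => ?_
  simp [cnt_cons, wordApply_cons, apply_ite δ, apply_ite σ]

theorem cnt_le {m : ℕ} (w : Fin m → Bool) : cnt w ≤ m := by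
  simpa [cnt] using Finset.card_filter_le (Finset.univ : Finset (Fin m)) fun t => w t = true

theorem sum_sum_words {M : Type*} [AddCommMonoid M] {m : ℕ} (G : ℕ → (Fin m → Bool) → M) :
    ∑ k ∈ Finset.range (m + 1), ∑ w ∈ words m k, G k w = ∑ w, G (cnt w) w := by
  simp_rw [sum_words]
  rw [Finset.sum_comm]
  refine Finset.sum_congr rfl fun w _ => ?_
  rw [Finset.sum_ite_eq, if_pos]
  have := cnt_le w
  simp
  omega

/-- Leibniz's identity: Let `B` be an abelian group with operators
in a set `A` (each `a ∈ A` acting as the additive endomorphism `act a`), let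
`σA δA : A → A` be maps and `σB δB` additive endomorphisms of `B`.  If `σB` is
`σA`-twisted and `δB` is a `δA`-twisted `σA`-derivation, then
`π_i^m (a • b) = ∑_{k=0}^{m} ∑_{w ∈ W_{m,k}} w_A(a) • π_i^k(b)`,
where `W_{m,k}` is the set of words of length `m` in `σ`, `δ` with exactly `k`
occurrences of `σ`, and `w_A(a)` is the result of applying to `a` the
corresponding composition of `σA` and `δA`. -/
theorem stmt8 {A B : Type*} [AddCommGroup B] (act : A → B →+ B)
    (σA δA : A → A) (σB δB : B →+ B)
    (hσ : ∀ (a : A) (b : B), σB (act a b) = act (σA a) (σB b))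
    (hδ : ∀ (a : A) (b : B), δB (act a b) = act (σA a) (δB b) + act (δA a) b)
    (a : A) (b : B) (i m : ℕ) :
    piFun ⇑σB ⇑δB m i (act a b) =
      ∑ k ∈ Finset.range (m + 1), ∑ w ∈ words m k,
        act (wordApply σA δA w a) (piFun ⇑σB ⇑δB k i b) := by
  rw [sum_sum_words (fun k w => act (wordApply σA δA w a) (piFun ⇑σB ⇑δB k i b))]
  induction m generalizing i with
  | zero =>
    have hc : ∀ w : Fin 0 → Bool, cnt w = 0 := fun w => by simp [cnt]
    have hp : ∀ x : B, piFun ⇑σB ⇑δB 0 i x = if i = 0 then x else 0 := fun x => by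
      cases i <;> simp [piFun, words, wordApply, Finset.sum_filter]
    simp only [hc, hp]
    cases i <;> simp [wordApply]
  | succ m ih =>
    rw [sum_cons_words]
    cases i with
    | zero =>
      rw [piFun_succ_zero, ih, map_sum]
      refine Finset.sum_congr rfl fun w _ => ?_
      simp [cnt_cons, wordApply_cons, hδ, piFun_succ_zero]
    | succ i =>
      rw [piFun_succ_succ, ih, ih, map_sum, map_sum, ← Finset.sum_add_distrib]
      refine Finset.sum_congr rfl fun w _ => ?_
      simp [cnt_cons, wordApply_cons, hδ, hσ, piFun_succ_succ, add_assoc]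
end

section
/- Let R be a left distributive ring with 0r = 0 for all r ∈ R, let σ_R, δ_R : R → R be maps, and let M be a left distributive, s-unital, and Noetherian left R-module with 0m = 0 for all m ∈ M. Let σ_M, δ_M be additive endomorphisms of M and suppose that σ_M is a σ_R-twisted surjection (i.e., σ_M is surjective and σ_M(rm) = σ_R(r)σ_M(m) for all r ∈ R, m ∈ M). Then the Ore module extension M[x;σ_M,δ_M] is Noetherian as a left R[x;σ_R,δ_R]-module, i.e., every ascending chain of R[x]-submodules of M[x] stabilizes. -/
/-- The Ore action of a polynomial `α = ∑ aᵢ xⁱ` over the operator set `A` on a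
polynomial `β = ∑ bⱼ xʲ` over the abelian group `B` (polynomials are encoded as
finitely supported functions `ℕ →₀ _`), given by
`α β = ∑_{i,j,k} (aᵢ • π_k^i(bⱼ)) x^{k+j}`, where the maps `π_k^i` are built
from `σ` and `δ` (only the terms with `k ≤ i` can be nonzero). -/
noncomputable def oreAct {A B : Type*} [Zero A] [AddCommGroup B] (act : A → B → B) (σ δ : B → B)
    (α : ℕ →₀ A) (β : ℕ →₀ B) : ℕ →₀ B :=
  α.sum fun i a => β.sum fun j b =>
    ∑ k ∈ Finset.range (i + 1), Finsupp.single (k + j) (act a (piFun σ δ i k b))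

/-- `opSet act S n` is the set `Aⁿ S` of elements
`a₁ (a₂ (⋯ (aₙ s) ⋯))` with `a₁, …, aₙ ∈ A` and `s ∈ S` (and `A⁰ S = S`). -/
def opSet {A B : Type*} (act : A → B → B) (S : Set B) : ℕ → Set B
  | 0 => S
  | n + 1 => {x | ∃ a : A, ∃ s ∈ opSet act S n, x = act a s}

/-- A subgroup of an abelian group `B` with operators in `A` is *stable* if it
is closed under the action of `A`. -/
def IsStableAdd {A B : Type*} [AddGroup B] (act : A → B → B) (C : AddSubgroup B) : Prop :=
  ∀ a : A, ∀ b ∈ C, act a b ∈ C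

/-- The smallest stable subgroup `⟨S⟩` of `B` containing the set `S`. -/
def stableClosureAdd {A B : Type*} [AddGroup B] (act : A → B → B) (S : Set B) : AddSubgroup B :=
  sInf {C : AddSubgroup B | IsStableAdd act C ∧ S ⊆ C}

/-- `[S]` : the subgroup of `B` generated by the union of the sets `Aⁿ S`, `n ≥ 1`. -/
def bracketAdd {A B : Type*} [AddGroup B] (act : A → B → B) (S : Set B) : AddSubgroup B :=
  AddSubgroup.closure (⋃ n : ℕ, opSet act S (n + 1))

/-- A group `B` with operators in `A` is *stably Noetherian* if every ascending
chain of stable subgroups of `B` eventually stabilizes. -/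
def StablyNoetherianAdd {A B : Type*} [AddGroup B] (act : A → B → B) : Prop :=
  ∀ f : ℕ → AddSubgroup B, (∀ n, IsStableAdd act (f n)) → Monotone f →
    ∃ N : ℕ, ∀ n : ℕ, N ≤ n → f n = f N

theorem aux_pi00 {B : Type*} [AddCommMonoid B] (σ δ : B → B) (b : B) : piFun σ δ 0 0 b = b := by
  have : words 0 0 = {fun _ => false} := by decide
  simp [piFun, this, wordApply]

theorem aux_pi10 {B : Type*} [AddCommMonoid B] (σ δ : B → B) (b : B) : piFun σ δ 1 0 b = δ b := by
  have : words 1 0 = {fun _ => false} := by decide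
  simp [piFun, this, wordApply]

theorem aux_pi11 {B : Type*} [AddCommMonoid B] (σ δ : B → B) (b : B) : piFun σ δ 1 1 b = σ b := by
  have : words 1 1 = {fun _ => true} := by decide
  simp [piFun, this, wordApply]

theorem aux_ore0 {R M : Type*} [AddCommGroup R] [AddCommGroup M] (smul : R → M → M)
    (hl : ∀ (r : R) (m n : M), smul r (m + n) = smul r m + smul r n)
    (h0 : ∀ m : M, smul 0 m = 0) (σ δ : M →+ M) (r : R) (β : ℕ →₀ M) (n : ℕ) :
    oreAct smul σ δ (Finsupp.single 0 r) β n = smul r (β n) := by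
  have hz : ∀ r, smul r 0 = 0 := fun r => by simpa using hl r 0 0
  unfold oreAct
  rw [Finsupp.sum_single_index (by simp [h0])]
  simp only [zero_add, Finset.sum_range_one, aux_pi00]
  induction β using Finsupp.induction_linear with
  | zero => simp [hz]
  | add f g hf hg =>
    rw [Finsupp.sum_add_index' (by simp [hz]) (by simp [hl])]
    rw [Finsupp.add_apply, hf, hg, Finsupp.add_apply, hl]
  | single a b =>
    rw [Finsupp.sum_single_index (by simp [hz])]
    by_cases h : a = n
    · simp [h]
    · simp [h, hz, Finsupp.single_apply]

theorem aux_ore1 {R M : Type*} [AddCommGroup R] [AddCommGroup M] (smul : R → M → M)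
    (hl : ∀ (r : R) (m n : M), smul r (m + n) = smul r m + smul r n)
    (h0 : ∀ m : M, smul 0 m = 0) (σ δ : M →+ M) (r : R) (β : ℕ →₀ M) (n : ℕ) :
    oreAct smul σ δ (Finsupp.single 1 r) β (n + 1)
      = smul r (δ (β (n + 1))) + smul r (σ (β n)) := by
  have hz : ∀ r, smul r 0 = 0 := fun r => by simpa using hl r 0 0
  unfold oreAct
  rw [Finsupp.sum_single_index (by simp [h0])]
  simp only [Finset.sum_range_succ, Finset.sum_range_zero, zero_add, aux_pi10, aux_pi11]
  induction β using Finsupp.induction_linear with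
  | zero => simp [hz]
  | add f g hf hg =>
    rw [Finsupp.sum_add_index' (by simp [hz]) (by intros; simp [hl]; abel)]
    rw [Finsupp.add_apply, hf, hg]; simp only [Finsupp.add_apply, map_add, hl]; abel
  | single a b =>
    rw [Finsupp.sum_single_index (by simp [hz])]
    simp only [Finsupp.add_apply, Finsupp.single_apply, add_comm 1 a, Nat.add_right_cancel_iff]
    congr 1 <;> split_ifs <;> simp [hz]

/-- The pulled back leading coefficient subgroup. -/
def auxP {M : Type*} [AddCommGroup M] (σ : M →+ M) (U : AddSubgroup (ℕ →₀ M)) (n : ℕ) :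
    AddSubgroup M where
  carrier := {m | ∃ p ∈ U, (∀ i, n < i → p i = 0) ∧ p n = σ^[n] m}
  zero_mem' := ⟨0, U.zero_mem, by simp, by simp [iterate_map_zero]⟩
  add_mem' := by
    rintro a b ⟨p, hp, hp1, hp2⟩ ⟨q, hq, hq1, hq2⟩
    refine ⟨p + q, U.add_mem hp hq, fun i hi => by simp [hp1 i hi, hq1 i hi], ?_⟩
    simp [hp2, hq2, iterate_map_add]
  neg_mem' := by
    rintro a ⟨p, hp, hp1, hp2⟩
    refine ⟨-p, U.neg_mem hp, fun i hi => by simp [hp1 i hi], ?_⟩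
    simp [hp2, iterate_map_neg]

theorem aux_mono {M : Type*} [AddCommGroup M] (σ : M →+ M) {U V : AddSubgroup (ℕ →₀ M)}
    (h : U ≤ V) (n : ℕ) : auxP σ U n ≤ auxP σ V n := by
  rintro a ⟨p, hp, hp1⟩
  exact ⟨p, h hp, hp1⟩

theorem aux_eq {M : Type*} [AddCommGroup M] (σ : M →+ M) (hs : Function.Surjective σ)
    {U V : AddSubgroup (ℕ →₀ M)}
    (h : U ≤ V) (hP : ∀ n, auxP σ U n = auxP σ V n) : V = U := by
  refine le_antisymm ?_ h
  have key : ∀ n, ∀ p ∈ V, (∀ i, n ≤ i → p i = 0) → p ∈ U := by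
    intro n
    induction n with
    | zero =>
      intro p _ h0
      have : p = 0 := by ext i; exact h0 i (Nat.zero_le _)
      rw [this]; exact U.zero_mem
    | succ n ih =>
      intro p hp h0
      obtain ⟨m, hm⟩ := hs.iterate n (p n)
      have : m ∈ auxP σ V n := ⟨p, hp, fun i hi => h0 i hi, hm.symm⟩
      rw [← hP n] at this
      obtain ⟨q, hq, hq1, hq2⟩ := this
      have h2 : p - q ∈ U := by
        refine ih _ (V.sub_mem hp (h hq)) fun i hi => ?_
        rcases hi.eq_or_lt with rfl | hi
        · simp [hq2, hm]
        · simp [hq1 i hi, h0 i hi]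
      simpa using U.add_mem h2 hq
  intro p hp
  refine key (p.support.sup id + 1) p hp fun i hi => ?_
  by_contra hne
  have := Finset.le_sup (f := id) (Finsupp.mem_support_iff.2 hne)
  simp only [id] at this
  omega

/-- Let `R` be a left distributive ring (with `0r = 0`), let
`σR δR : R → R` be maps, and let `M` be a left distributive, s-unital and
Noetherian left `R`-module (with `0m = 0`).  If `σM` is a `σR`-twisted
surjective additive endomorphism of `M` (and `δM` is any additive endomorphism
of `M`), then the Ore module extension `M[x;σM,δM]` is Noetherian as a left
`R[x;σR,δR]`-module: every ascending chain of `R[x]`-submodules of `M[x]`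
(additive subgroups closed under the Ore action) stabilizes.
Noetherianity of `M` and of `M[x]` is expressed via `StablyNoetherianAdd`,
whose stable subgroups are exactly the submodules. -/
theorem stmt17 {R M : Type*} [AddCommGroup R] [AddCommGroup M]
    (mul : R → R → R) (smul : R → M → M)
    (hmul_ld : ∀ r s t : R, mul r (s + t) = mul r s + mul r t)
    (h0r : ∀ r : R, mul 0 r = 0)
    (hsmul_ld : ∀ (r : R) (m n : M), smul r (m + n) = smul r m + smul r n)
    (h0m : ∀ m : M, smul 0 m = 0)
    (σR δR : R → R) (σM δM : M →+ M)
    (hsu : ∀ m : M, ∃ r : R, smul r m = m)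
    (hNoeth : StablyNoetherianAdd smul)
    (hsurj : Function.Surjective ⇑σM)
    (htw : ∀ (r : R) (m : M), σM (smul r m) = smul (σR r) (σM m)) :
    StablyNoetherianAdd (fun (α : ℕ →₀ R) (μ : ℕ →₀ M) => oreAct smul ⇑σM ⇑δM α μ) := by
  intro f hf hmono
  have hstab : ∀ k n, IsStableAdd smul (auxP σM (f k) n) := by
    rintro k n r m ⟨p, hp, hp1, hp2⟩
    have hit : ∀ n r m, σM^[n] (smul r m) = smul (σR^[n] r) (σM^[n] m) := by
      intro n
      induction n with
      | zero => simp
      | succ n ih => intro r m; simp [htw, ih]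
    have hz : ∀ r, smul r 0 = 0 := fun r => by simpa using hsmul_ld r 0 0
    refine ⟨_, hf k (Finsupp.single 0 (σR^[n] r)) p hp, fun i hi => ?_, ?_⟩
    · simp only [aux_ore0 smul hsmul_ld h0m, hp1 i hi, hz]
    · simp only [aux_ore0 smul hsmul_ld h0m, hp2, hit]
  have hsucc : ∀ k, Monotone (auxP σM (f k)) := by
    intro k
    refine monotone_nat_of_le_succ ?_
    rintro n m ⟨p, hp, hp1, hp2⟩
    have hz : ∀ r, smul r 0 = 0 := fun r => by simpa using hsmul_ld r 0 0
    obtain ⟨r, hr⟩ := hsu (σM (p n))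
    refine ⟨_, hf k (Finsupp.single 1 r) p hp, fun i hi => ?_, ?_⟩
    · obtain ⟨j, rfl⟩ : ∃ j, i = j + 1 := ⟨i - 1, by omega⟩
      simp only [aux_ore1 smul hsmul_ld h0m, hp1 j (by omega), hp1 (j + 1) (by omega), hz, map_zero,
        add_zero]
    · simp only [aux_ore1 smul hsmul_ld h0m, hp1 (n + 1) (by omega), hz, map_zero, hr, zero_add]
      rw [hp2, Function.iterate_succ_apply']
  have hP2 : ∀ {k l n m : ℕ}, k ≤ l → n ≤ m → auxP σM (f k) n ≤ auxP σM (f l) m :=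
    fun hk hn => (aux_mono σM (hmono hk) _).trans (hsucc _ hn)
  obtain ⟨N, hN⟩ := hNoeth (fun k => auxP σM (f k) k) (fun k => hstab k k)
    (fun a b h => hP2 h h)
  have hcol := fun n => hNoeth (fun k => auxP σM (f k) n) (fun k => hstab k n)
    (fun a b h => hP2 h le_rfl)
  choose c hc using hcol
  have hbig : ∀ k n, N ≤ k → N ≤ n → auxP σM (f k) n = auxP σM (f N) N := by
    intro k n hk hn
    refine le_antisymm ?_ (hP2 hk hn)
    rw [← hN (max k n) (by omega)]
    exact hP2 (le_max_left _ _) (le_max_right _ _)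
  refine ⟨max N ((Finset.range N).sup c), fun k hk => aux_eq σM hsurj (hmono hk) fun n => ?_⟩
  by_cases hn : N ≤ n
  · rw [hbig _ _ (le_max_left _ _) hn, hbig k n (by omega) hn]
  · have h1 : c n ≤ (Finset.range N).sup c := Finset.le_sup (Finset.mem_range.2 (by omega))
    have e1 := hc n k (by omega)
    have e2 := hc n (max N ((Finset.range N).sup c)) (by omega)
    exact e2.trans e1.symm
end
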